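/- For each integer n ≥ 3, let λ_n be the largest real root of the polynomial t^{2n−1} − 2t^{n} − 2t^{n−1} + 1 (such a root exists and satisfies λ_n > 1). Then lim_{n→∞} (2n − 1) · log λ_n = 2 · log(2 + √3). -/

import Mathlib

open Filter

/-- The clique polynomial `t^{2n-1} - 2t^n - 2t^{n-1} + 1` of the fibered class
`(1, n-1)₀`, as a real function. -/
noncomputable def Pfun (n : ℕ) (t : ℝ) : ℝ :=
  t ^ (2 * n - 1) - 2 * t ^ n - 2 * t ^ (n - 1) + 1

/-!
The polynomial is reciprocal: writing `t = exp u` and dividing by `2 t ^ (n - 1/2)` turns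
`Pfun n t = 0` into `cosh ((2n - 1) u / 2) = 2 cosh (u / 2)`. For `n ≥ 2` every root `t > 1` is
less than `3` and satisfies `t ^ n < 2 (t + 1) < 8`, so `u → 0` as `n → ∞`. Hence
`(2n - 1) u = 2 arcosh (2 cosh (u / 2))` tends to `2 arcosh 2 = 2 log (2 + √3)`.
-/

open Real Set Topology

theorem exists_isGreatest_preimage_singleton {α β : Type*} [ConditionallyCompleteLinearOrder α]
    [TopologicalSpace α] [OrderTopology α] [DenselyOrdered α] [LinearOrder β] [TopologicalSpace β]
    [OrderClosedTopology β] {f : α → β} {a b : α} {c : β} (hf : ContinuousOn f (Icc a b))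
    (ha : f a < c) (hb : ∀ x, b ≤ x → c < f x) : ∃ x, a < x ∧ IsGreatest (f ⁻¹' {c}) x := by
  have hab : a < b := lt_of_not_ge fun hba => ha.not_gt (hb a hba)
  obtain ⟨z, hz⟩ : (Icc a b ∩ f ⁻¹' {c}).Nonempty :=
    intermediate_value_Icc hab.le hf ⟨ha.le, (hb b le_rfl).le⟩
  have hcompact : IsCompact (Icc a b ∩ f ⁻¹' {c}) :=
    isCompact_Icc.of_isClosed_subset
      (hf.preimage_isClosed_of_isClosed isClosed_Icc isClosed_singleton) inter_subset_left
  obtain ⟨x, ⟨⟨hax, -⟩, hfx : f x = c⟩, hmax⟩ := hcompact.exists_isGreatest ⟨z, hz⟩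
  refine ⟨x, hax.lt_of_ne ?_, hfx, fun y (hy : f y = c) => ?_⟩
  · rintro rfl
    exact ha.ne hfx
  · have hyb : y < b := lt_of_not_ge fun hby => (hb y hby).ne' hy
    rcases le_total a y with hay | hya
    · exact hmax ⟨⟨hay, hyb.le⟩, hy⟩
    · exact hya.trans hax

theorem tendsto_arcosh_two_mul_cosh_half :
    Tendsto (fun u : ℝ => arcosh (2 * cosh (u / 2))) (𝓝 0) (𝓝 (log (2 + √3))) := by
  have hmaps (u : ℝ) : 2 * cosh (u / 2) ∈ Ici (1 : ℝ) := by
    rw [mem_Ici]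
    linarith [one_le_cosh (u / 2)]
  have hcont : Continuous fun u : ℝ => arcosh (2 * cosh (u / 2)) :=
    continuousOn_arcosh.comp_continuous (by fun_prop) hmaps
  have hvalue : arcosh (2 * cosh (0 / 2)) = log (2 + √3) := by
    norm_num [arcosh]
  exact hvalue ▸ hcont.tendsto 0

section CliquePolynomial

variable {n : ℕ} {t : ℝ}

theorem continuous_Pfun (n : ℕ) : Continuous (Pfun n) := by
  unfold Pfun
  fun_prop

theorem Pfun_one_neg (n : ℕ) : Pfun n 1 < 0 := by
  norm_num [Pfun]

theorem Pfun_eq_pow_mul_add_one (hn : n ≠ 0) (t : ℝ) :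
    Pfun n t = t ^ (n - 1) * (t ^ n - 2 * (t + 1)) + 1 := by
  obtain ⟨m, rfl⟩ := Nat.exists_eq_succ_of_ne_zero hn
  simp only [Pfun, Nat.succ_eq_add_one, Nat.add_sub_cancel,
    show 2 * (m + 1) - 1 = m + (m + 1) by lia]
  ring

theorem Pfun_exp (hn : n ≠ 0) (u : ℝ) :
    Pfun n (exp u) =
      2 * exp ((2 * n - 1) * u / 2) * (cosh ((2 * n - 1) * u / 2) - 2 * cosh (u / 2)) := by
  set v : ℝ := (2 * n - 1) * u / 2 with hv
  have hn1 : 1 ≤ n := Nat.one_le_iff_ne_zero.2 hn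
  have hpow_two_mul_sub_one : exp u ^ (2 * n - 1) = exp v * exp v := by
    rw [← exp_nat_mul, ← exp_add, Nat.cast_sub (by lia), hv]
    push_cast
    ring_nf
  have hpow : exp u ^ n = exp v * exp (u / 2) := by
    rw [← exp_nat_mul, ← exp_add, hv]
    ring_nf
  have hpow_sub_one : exp u ^ (n - 1) = exp v * exp (-(u / 2)) := by
    rw [← exp_nat_mul, ← exp_add, Nat.cast_sub hn1, hv]
    push_cast
    ring_nf
  have hcancel : exp v * exp (-v) = 1 := by rw [← exp_add, add_neg_cancel, exp_zero]
  rw [Pfun, hpow_two_mul_sub_one, hpow, hpow_sub_one, cosh_eq, cosh_eq]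
  linear_combination -hcancel

theorem Pfun_pos_of_le_pow (hn : n ≠ 0) (ht : 0 ≤ t) (hpow : 2 * (t + 1) ≤ t ^ n) :
    0 < Pfun n t := by
  rw [Pfun_eq_pow_mul_add_one hn]
  exact add_pos_of_nonneg_of_pos (mul_nonneg (pow_nonneg ht _) (sub_nonneg.2 hpow)) one_pos

theorem Pfun_pos_of_three_le (hn : 2 ≤ n) (ht : 3 ≤ t) : 0 < Pfun n t := by
  refine Pfun_pos_of_le_pow (by lia) (by linarith) ?_
  calc 2 * (t + 1) ≤ t ^ 2 := by nlinarith
    _ ≤ t ^ n := pow_le_pow_right₀ (by linarith) hn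

theorem exists_isGreatest_Pfun_root (hn : 2 ≤ n) :
    ∃ L, 1 < L ∧ IsGreatest (Pfun n ⁻¹' {0}) L :=
  exists_isGreatest_preimage_singleton (continuous_Pfun n).continuousOn (Pfun_one_neg n)
    fun _ => Pfun_pos_of_three_le hn

theorem mul_log_eq_two_mul_arcosh_of_Pfun_eq_zero (hn : n ≠ 0) (ht : 1 ≤ t)
    (hroot : Pfun n t = 0) :
    (2 * n - 1) * log t = 2 * arcosh (2 * cosh (log t / 2)) := by
  have hcosh : cosh ((2 * n - 1) * log t / 2) = 2 * cosh (log t / 2) := by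
    rw [← exp_log (zero_lt_one.trans_le ht), Pfun_exp hn] at hroot
    simpa [sub_eq_zero] using hroot
  have hnonneg : 0 ≤ (2 * n - 1) * log t / 2 := by
    have hn' : (1 : ℝ) ≤ n := Nat.one_le_cast.2 (Nat.one_le_iff_ne_zero.2 hn)
    exact div_nonneg (mul_nonneg (by linarith) (log_nonneg ht)) zero_le_two
  rw [← hcosh, arcosh_cosh hnonneg]
  ring

theorem log_le_div_of_Pfun_eq_zero (hn : 2 ≤ n) (ht : 0 < t) (hroot : Pfun n t = 0) :
    log t ≤ log 8 / n := by
  have ht3 : t < 3 := lt_of_not_ge fun h3t => (Pfun_pos_of_three_le hn h3t).ne' hroot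
  have hpow : t ^ n < 2 * (t + 1) :=
    lt_of_not_ge fun hle => (Pfun_pos_of_le_pow (by lia) ht.le hle).ne' hroot
  rw [le_div_iff₀' (by positivity), ← log_pow]
  exact log_le_log (by positivity) (by linarith)

theorem tendsto_log_of_Pfun_eq_zero {r : ℕ → ℝ} (hr : ∀ᶠ n in atTop, 1 < r n ∧ Pfun n (r n) = 0) :
    Tendsto (fun n => log (r n)) atTop (𝓝 0) := by
  refine squeeze_zero' ?_ ?_ (tendsto_const_div_atTop_nhds_zero_nat (log 8))
  · filter_upwards [hr] with n hn using log_nonneg hn.1.le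
  · filter_upwards [hr, eventually_ge_atTop 2] with n ⟨hgt, hroot⟩ hn
    exact log_le_div_of_Pfun_eq_zero hn (zero_lt_one.trans hgt) hroot

theorem tendsto_mul_log_of_Pfun_eq_zero {r : ℕ → ℝ}
    (hr : ∀ᶠ n in atTop, 1 < r n ∧ Pfun n (r n) = 0) :
    Tendsto (fun n : ℕ => (2 * (n : ℝ) - 1) * log (r n)) atTop (𝓝 (2 * log (2 + √3))) := by
  have hlog : Tendsto (fun n => log (r n)) atTop (𝓝 0) := tendsto_log_of_Pfun_eq_zero hr
  refine ((tendsto_arcosh_two_mul_cosh_half.comp hlog).const_mul 2).congr' ?_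
  filter_upwards [hr, eventually_ne_atTop 0] with n ⟨hgt, hroot⟩ hn
  exact (mul_log_eq_two_mul_arcosh_of_Pfun_eq_zero hn hgt.le hroot).symm

end CliquePolynomial

theorem stmt14 :
    (∀ n : ℕ, 3 ≤ n →
      ∃ L : ℝ, 1 < L ∧ Pfun n L = 0 ∧ ∀ r : ℝ, Pfun n r = 0 → r ≤ L) ∧
    ∀ lam : ℕ → ℝ,
      (∀ n : ℕ, 3 ≤ n → Pfun n (lam n) = 0 ∧ ∀ r : ℝ, Pfun n r = 0 → r ≤ lam n) →
      Tendsto (fun n : ℕ => (2 * (n : ℝ) - 1) * Real.log (lam n)) atTop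
        (nhds (2 * Real.log (2 + Real.sqrt 3))) := by
  refine ⟨fun n hn => exists_isGreatest_Pfun_root (by lia), fun lam hlam => ?_⟩
  apply tendsto_mul_log_of_Pfun_eq_zero
  filter_upwards [eventually_ge_atTop 3] with n hn
  obtain ⟨hroot, hmax⟩ := hlam n hn
  obtain ⟨L, hL, hLroot, -⟩ := exists_isGreatest_Pfun_root (n := n) (by lia)
  exact ⟨hL.trans_le (hmax L hLroot), hroot⟩
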